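/- Let Y ∈ ℝ^{m×p} and 1 ≤ r ≤ m with σ_r(Y) > σ_{r+1}(Y). If A, B ∈ O_{m×r} both maximize ‖ZᵀY‖_F² over Z ∈ O_{m×r}, then AAᵀ = BBᵀ. -/

import Mathlib

open Matrix BigOperators Filter

/-- The squared Frobenius norm of a real matrix. -/
def froSq {ι κ : Type*} [Fintype ι] [Fintype κ] (M : Matrix ι κ ℝ) : ℝ :=
  ∑ i, ∑ j, (M i j) ^ 2

/-- The Frobenius norm of a real matrix. -/
noncomputable def fro {ι κ : Type*} [Fintype ι] [Fintype κ] (M : Matrix ι κ ℝ) : ℝ :=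
  Real.sqrt (froSq M)

/-- The eigenvalues of `Y * Yᴴ`, sorted in descending order. -/
noncomputable def eigList {m : ℕ} {κ : Type*} [Fintype κ] (Y : Matrix (Fin m) κ ℝ) : List ℝ :=
  ((((Finset.univ : Finset (Fin m)).val.map
      (fun j => (Matrix.isHermitian_mul_conjTranspose_self Y).eigenvalues j)).sort (· ≤ ·)).reverse)

/-- The `i`-th largest singular value (1-indexed) of a real matrix, with the
convention that it is `0` beyond the smaller matrix dimension. -/
noncomputable def sval {m : ℕ} {κ : Type*} [Fintype κ] (Y : Matrix (Fin m) κ ℝ) (i : ℕ) : ℝ :=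
  Real.sqrt ((eigList Y).getD (i - 1) 0)

/-- The set of `m × r` real matrices with orthonormal columns. -/
def Stiefel (m r : ℕ) : Set (Matrix (Fin m) (Fin r) ℝ) :=
  {Z | Zᵀ * Z = 1}

/-- `H_{Y,r}`: the set of maximizers of `‖Zᵀ Y‖_F²` over the Stiefel manifold. -/
def HSet {m p : ℕ} (Y : Matrix (Fin m) (Fin p) ℝ) (r : ℕ) : Set (Matrix (Fin m) (Fin r) ℝ) :=
  {Z | Z ∈ Stiefel m r ∧ ∀ W ∈ Stiefel m r, froSq (Wᵀ * Y) ≤ froSq (Zᵀ * Y)}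

/-- The nuclear norm: the sum of all singular values. -/
noncomputable def nuclearNorm {a b : ℕ} (M : Matrix (Fin a) (Fin b) ℝ) : ℝ :=
  ∑ i ∈ Finset.range (min a b), sval M (i + 1)

/-- `U` maximizes `‖Uᵀ X‖_*` over `H_{Y,r}`. -/
def NucMax {m p r : ℕ} (Y : Matrix (Fin m) (Fin p) ℝ) (X U : Matrix (Fin m) (Fin r) ℝ) : Prop :=
  U ∈ HSet Y r ∧ ∀ V ∈ HSet Y r, nuclearNorm (Vᵀ * X) ≤ nuclearNorm (Uᵀ * X)

/-- The uniqueness conditions for `(Y, r)` at `X`. -/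
def UniqCond {m p : ℕ} (Y : Matrix (Fin m) (Fin p) ℝ) (r : ℕ)
    (X : Matrix (Fin m) (Fin r) ℝ) : Prop :=
  (∀ U, NucMax Y X U → (Uᵀ * X).det ≠ 0) ∧
  (∀ U₁ U₂, NucMax Y X U₁ → NucMax Y X U₂ → U₁ * U₁ᵀ = U₂ * U₂ᵀ)

/-- `Z` is a minimizer of `‖Z − X‖_F²` over `H_{Y,r}`. -/
def IsProj {m p r : ℕ} (Y : Matrix (Fin m) (Fin p) ℝ) (X Z : Matrix (Fin m) (Fin r) ℝ) : Prop :=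
  Z ∈ HSet Y r ∧ ∀ W ∈ HSet Y r, froSq (Z - X) ≤ froSq (W - X)

/-- The trace inner product of two matrices. -/
noncomputable def tinner {a b : ℕ} (A B : Matrix (Fin a) (Fin b) ℝ) : ℝ :=
  Matrix.trace (Aᵀ * B)

/-!
Diagonalize `Y Yᵀ = U diag(λ) Uᵀ`. For `Z` with orthonormal columns the objective is
`‖Zᵀ Y‖² = ∑ i, λ i * Q i i`, where `Q = (Uᵀ Z) (Uᵀ Z)ᵀ` is an orthogonal projection of rank `r`.
Let `E` be the coordinate projection onto the `r` largest eigenvalues. If those are at least `a` and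
the others at most `b`, then, since `Q` has diagonal entries in `[0, 1]` and the same trace as `E`,
`(a - b) / 2 * ‖E - Q‖² ≤ ∑ i, λ i * E i i - ∑ i, λ i * Q i i`.
The first sum on the right is the objective at the top `r` eigenvectors, so the right-hand side is
nonpositive for a maximizer; as `b < a`, this forces `Q = E`, that is `Z Zᵀ = U E Uᵀ`.
-/

section Frobenius

variable {ι κ : Type*} [Fintype ι] [Fintype κ]

lemma froSq_eq_trace (M : Matrix ι κ ℝ) : froSq M = (M * Mᵀ).trace := by
  simp [froSq, trace, mul_apply, sq]

lemma eq_zero_of_froSq_nonpos {M : Matrix ι κ ℝ} (hM : froSq M ≤ 0) : M = 0 := by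
  have hnonneg : 0 ≤ froSq M :=
    Finset.sum_nonneg fun _ _ => Finset.sum_nonneg fun _ _ => sq_nonneg _
  rw [← trace_mul_conjTranspose_self_eq_zero_iff, conjTranspose_eq_transpose_of_trivial,
    ← froSq_eq_trace]
  exact hM.antisymm hnonneg

lemma froSq_sub_of_isStarProjection {P Q : Matrix ι ι ℝ} (hP : IsStarProjection P)
    (hQ : IsStarProjection Q) : froSq (P - Q) = P.trace + Q.trace - 2 * (P * Q).trace := by
  have hsymm : (P - Q)ᵀ = P - Q := (hP.isSelfAdjoint.sub hQ.isSelfAdjoint).star_eq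
  rw [froSq_eq_trace, hsymm, sub_mul, mul_sub, mul_sub, hP.isIdempotentElem.eq,
    hQ.isIdempotentElem.eq, trace_sub, trace_sub, trace_sub, trace_mul_comm Q P]
  ring

end Frobenius

section Projection

variable {n k : Type*} [Fintype n]

lemma diag_nonneg_of_isStarProjection {Q : Matrix n n ℝ} (hQ : IsStarProjection Q) (i : n) :
    0 ≤ Q i i := by
  have hpos : (Qᴴ * Q).PosSemidef := posSemidef_conjTranspose_mul_self Q
  rw [← star_eq_conjTranspose, hQ.isSelfAdjoint.star_eq, hQ.isIdempotentElem.eq] at hpos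
  exact hpos.diag_nonneg

lemma diag_le_one_of_isStarProjection {Q : Matrix n n ℝ} (hQ : IsStarProjection Q) (i : n) :
    Q i i ≤ 1 := by
  classical
  have h : 0 ≤ (1 - Q) i i := diag_nonneg_of_isStarProjection hQ.one_sub i
  simpa using h

lemma isStarProjection_mul_transpose_self [Fintype k] [DecidableEq k] {Z : Matrix n k ℝ}
    (hZ : Zᵀ * Z = 1) : IsStarProjection (Z * Zᵀ) where
  isIdempotentElem := by
    rw [IsIdempotentElem, Matrix.mul_assoc, ← Matrix.mul_assoc Zᵀ, hZ, Matrix.one_mul]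
  isSelfAdjoint := isHermitian_mul_conjTranspose_self Z

/-- The orthogonal projection of `ℝⁿ` onto the span of the standard basis vectors indexed by `s`,
as a matrix. -/
def coordProj [DecidableEq n] (s : Finset n) : Matrix n n ℝ :=
  diagonal fun i => if i ∈ s then 1 else 0

variable [DecidableEq n]

lemma isStarProjection_coordProj (s : Finset n) : IsStarProjection (coordProj s) where
  isIdempotentElem := by simp [IsIdempotentElem, coordProj]
  isSelfAdjoint := isHermitian_diagonal _

lemma trace_coordProj_mul (s : Finset n) (M : Matrix n n ℝ) :
    (coordProj s * M).trace = ∑ i ∈ s, M i i := by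
  simp [coordProj, trace, diagonal_mul]

lemma trace_coordProj (s : Finset n) : (coordProj s).trace = s.card := by
  simpa using trace_coordProj_mul s 1

lemma half_gap_mul_froSq_coordProj_sub_le {Q : Matrix n n ℝ} (hQ : IsStarProjection Q)
    {s : Finset n} (htr : Q.trace = s.card) {d : n → ℝ} {a b : ℝ} (ha : ∀ i ∈ s, a ≤ d i)
    (hb : ∀ i ∉ s, d i ≤ b) :
    (a - b) / 2 * froSq (coordProj s - Q) ≤ ∑ i ∈ s, d i - ∑ i, d i * Q i i := by
  have hdefect : s.card - ∑ i ∈ s, Q i i = ∑ i ∈ sᶜ, Q i i := by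
    rw [← htr, sub_eq_iff_eq_add']
    exact (Finset.sum_add_sum_compl s _).symm
  have hfro : froSq (coordProj s - Q) = 2 * ∑ i ∈ sᶜ, Q i i := by
    rw [froSq_sub_of_isStarProjection (isStarProjection_coordProj s) hQ, trace_coordProj, htr,
      trace_coordProj_mul, ← hdefect]
    ring
  have htop : a * ∑ i ∈ sᶜ, Q i i ≤ ∑ i ∈ s, d i - ∑ i ∈ s, d i * Q i i := calc
    a * ∑ i ∈ sᶜ, Q i i = ∑ i ∈ s, a * (1 - Q i i) := by
      rw [← hdefect, ← Finset.mul_sum, Finset.sum_sub_distrib, Finset.sum_const, nsmul_one]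
    _ ≤ ∑ i ∈ s, d i * (1 - Q i i) := Finset.sum_le_sum fun i hi =>
      mul_le_mul_of_nonneg_right (ha i hi) (sub_nonneg.2 (diag_le_one_of_isStarProjection hQ i))
    _ = ∑ i ∈ s, d i - ∑ i ∈ s, d i * Q i i := by
      simp only [mul_sub, mul_one, Finset.sum_sub_distrib]
  have hbot : ∑ i ∈ sᶜ, d i * Q i i ≤ b * ∑ i ∈ sᶜ, Q i i := by
    rw [Finset.mul_sum]
    exact Finset.sum_le_sum fun i hi => mul_le_mul_of_nonneg_right
      (hb i (Finset.mem_compl.1 hi)) (diag_nonneg_of_isStarProjection hQ i)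
  rw [hfro, ← Finset.sum_add_sum_compl s fun i => d i * Q i i]
  linarith

end Projection

section Diagonalization

variable {n k κ : Type*} [Fintype n] [Fintype κ] [DecidableEq n]

lemma transpose_submatrix_mul_submatrix_eq_one [DecidableEq k] {U : Matrix n n ℝ} (hU : Uᵀ * U = 1)
    (g : k ↪ n) : (U.submatrix id g)ᵀ * U.submatrix id g = 1 := by
  rw [transpose_submatrix, ← submatrix_mul _ _ _ _ _ Function.bijective_id, hU,
    submatrix_one_embedding]

lemma exists_orthogonal_mul_transpose_self_eq (Y : Matrix n κ ℝ) :
    ∃ U : Matrix n n ℝ, Uᵀ * U = 1 ∧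
      Y * Yᵀ = U * diagonal (isHermitian_mul_conjTranspose_self Y).eigenvalues * Uᵀ :=
  have hY := isHermitian_mul_conjTranspose_self Y
  -- Over `ℝ`, `ᵀ`, `ᴴ` and `star` agree definitionally.
  ⟨hY.eigenvectorUnitary, Unitary.coe_star_mul_self hY.eigenvectorUnitary, hY.spectral_theorem⟩

variable [Fintype k] {Y : Matrix n κ ℝ} {U : Matrix n n ℝ} {d : n → ℝ}

lemma froSq_transpose_mul_eq_sum (hY : Y * Yᵀ = U * diagonal d * Uᵀ) (Z : Matrix n k ℝ) :
    froSq (Zᵀ * Y) = ∑ i, d i * (Uᵀ * Z * (Uᵀ * Z)ᵀ) i i := calc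
  froSq (Zᵀ * Y) = (Zᵀ * (Y * Yᵀ) * Z).trace := by
    rw [froSq_eq_trace, transpose_mul, transpose_transpose]
    simp only [Matrix.mul_assoc]
  _ = ((Uᵀ * Z)ᵀ * (diagonal d * (Uᵀ * Z))).trace := by
    rw [hY, transpose_mul, transpose_transpose]
    simp only [Matrix.mul_assoc]
  _ = ∑ i, d i * (Uᵀ * Z * (Uᵀ * Z)ᵀ) i i := by
    rw [trace_mul_comm, Matrix.mul_assoc]
    simp only [trace, diag_apply, diagonal_mul]

lemma froSq_transpose_submatrix_mul (hU : Uᵀ * U = 1) (hY : Y * Yᵀ = U * diagonal d * Uᵀ)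
    (g : k ↪ n) : froSq ((U.submatrix id g)ᵀ * Y) = ∑ j, d (g j) := by
  classical
  have hdiag : Uᵀ * (Y * Yᵀ) * U = diagonal d := calc
    Uᵀ * (Y * Yᵀ) * U = Uᵀ * U * diagonal d * (Uᵀ * U) := by rw [hY]; simp only [Matrix.mul_assoc]
    _ = diagonal d := by rw [hU, Matrix.one_mul, Matrix.mul_one]
  have hsub : (U.submatrix id g)ᵀ * Y * ((U.submatrix id g)ᵀ * Y)ᵀ =
      (Uᵀ * (Y * Yᵀ) * U).submatrix g g := by
    rw [transpose_mul, transpose_transpose, Matrix.mul_assoc, ← Matrix.mul_assoc Y,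
      ← Matrix.mul_assoc]
    rfl
  rw [froSq_eq_trace, hsub, hdiag, submatrix_diagonal_embedding, trace_diagonal]
  rfl

lemma half_gap_mul_froSq_coordProj_sub_le_froSq_sub [DecidableEq k] (hU : Uᵀ * U = 1)
    (hY : Y * Yᵀ = U * diagonal d * Uᵀ) {g : k ↪ n} {a b : ℝ} (ha : ∀ j, a ≤ d (g j))
    (hb : ∀ i ∉ Set.range g, d i ≤ b) {Z : Matrix n k ℝ} (hZ : Zᵀ * Z = 1) :
    (a - b) / 2 * froSq (coordProj (Finset.univ.map g) - Uᵀ * Z * (Uᵀ * Z)ᵀ) ≤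
      froSq ((U.submatrix id g)ᵀ * Y) - froSq (Zᵀ * Y) := by
  have hUZ : (Uᵀ * Z)ᵀ * (Uᵀ * Z) = 1 := by
    rw [transpose_mul, transpose_transpose, Matrix.mul_assoc, ← Matrix.mul_assoc U,
      mul_eq_one_comm.1 hU, Matrix.one_mul, hZ]
  have htr : (Uᵀ * Z * (Uᵀ * Z)ᵀ).trace = (Finset.univ.map g).card := by
    rw [trace_mul_comm, hUZ, trace_one, Finset.card_map, Finset.card_univ]
  rw [froSq_transpose_submatrix_mul hU hY, froSq_transpose_mul_eq_sum hY,
    ← Finset.sum_map Finset.univ g d]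
  exact half_gap_mul_froSq_coordProj_sub_le (isStarProjection_mul_transpose_self hUZ) htr
    (by simpa using ha) (by simpa using hb)

end Diagonalization

section Sorting

variable {α : Type*} [LinearOrder α] {m : ℕ}

lemma exists_perm_antitone (f : Fin m → α) : ∃ σ : Equiv.Perm (Fin m), Antitone (f ∘ σ) :=
  ⟨Tuple.sort (OrderDual.toDual ∘ f), Tuple.monotone_sort (OrderDual.toDual ∘ f)⟩

lemma reverse_sort_eq_ofFn {f : Fin m → α} {σ : Equiv.Perm (Fin m)} (hσ : Antitone (f ∘ σ)) :
    ((Finset.univ.val.map f).sort (· ≤ ·)).reverse = List.ofFn (f ∘ σ) := by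
  refine List.Perm.eq_of_sortedGE ?_ hσ.sortedGE_ofFn ?_
  · exact (Multiset.pairwise_sort _ (· ≤ ·)).sortedLE.reverse
  · rw [← Multiset.coe_eq_coe, Multiset.coe_reverse, Multiset.sort_eq,
      Function.comp_def, ← Fin.univ_val_map, ← Function.comp_def,
      ← Multiset.map_map, Multiset.map_univ_val_equiv]

lemma exists_embedding_getD_reverse_sort {r : ℕ} (hrm : r ≤ m) (f : Fin m → α) (x : α) :
    ∃ g : Fin r ↪ Fin m,
      (∀ j, ((Finset.univ.val.map f).sort (· ≤ ·)).reverse.getD (r - 1) x ≤ f (g j)) ∧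
      ∀ i ∉ Set.range g, f i ≤ ((Finset.univ.val.map f).sort (· ≤ ·)).reverse.getD r x := by
  obtain ⟨σ, hσ⟩ := exists_perm_antitone f
  have hget {i : ℕ} (hi : i < m) :
      ((Finset.univ.val.map f).sort (· ≤ ·)).reverse.getD i x = f (σ ⟨i, hi⟩) := by
    rw [reverse_sort_eq_ofFn hσ, List.getD_eq_getElem _ _ (by simpa using hi), List.getElem_ofFn]
    rfl
  refine ⟨(Fin.castLEEmb hrm).trans σ.toEmbedding, fun j => ?_, fun i hi => ?_⟩
  · have hr : r - 1 < m := (Nat.sub_lt j.pos one_pos).trans_le hrm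
    rw [hget hr]
    exact hσ (Fin.mk_le_mk.2 (Nat.le_sub_one_of_lt j.isLt) : j.castLE hrm ≤ ⟨r - 1, _⟩)
  · have hri : r ≤ σ.symm i := by
      by_contra! hlt
      exact hi ⟨⟨σ.symm i, hlt⟩, σ.apply_symm_apply i⟩
    rw [hget (hri.trans_lt (σ.symm i).isLt)]
    simpa using hσ (Fin.mk_le_mk.2 hri : (⟨r, _⟩ : Fin m) ≤ σ.symm i)

end Sorting

lemma getD_eigList_lt_of_sval_lt {m r : ℕ} {κ : Type*} [Fintype κ] {Y : Matrix (Fin m) κ ℝ}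
    (hgap : sval Y (r + 1) < sval Y r) : (eigList Y).getD r 0 < (eigList Y).getD (r - 1) 0 :=
  Real.sqrt_monotone.reflect_lt hgap

lemma mul_transpose_self_eq_of_mem_hSet {m p r : ℕ} {Y : Matrix (Fin m) (Fin p) ℝ}
    {U : Matrix (Fin m) (Fin m) ℝ} {d : Fin m → ℝ} (hU : Uᵀ * U = 1)
    (hY : Y * Yᵀ = U * diagonal d * Uᵀ) {g : Fin r ↪ Fin m} {a b : ℝ} (hba : b < a)
    (ha : ∀ j, a ≤ d (g j)) (hb : ∀ i ∉ Set.range g, d i ≤ b) {Z : Matrix (Fin m) (Fin r) ℝ}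
    (hZ : Z ∈ HSet Y r) : Z * Zᵀ = U * coordProj (Finset.univ.map g) * Uᵀ := by
  obtain ⟨hZorth, hZmax⟩ := hZ
  have hmax : froSq ((U.submatrix id g)ᵀ * Y) ≤ froSq (Zᵀ * Y) :=
    hZmax _ (transpose_submatrix_mul_submatrix_eq_one hU g)
  have hgap := half_gap_mul_froSq_coordProj_sub_le_froSq_sub hU hY ha hb hZorth
  have hproj : coordProj (Finset.univ.map g) = Uᵀ * Z * (Uᵀ * Z)ᵀ :=
    sub_eq_zero.1 <| eq_zero_of_froSq_nonpos <|
      nonpos_of_mul_nonpos_right (hgap.trans (sub_nonpos.2 hmax)) (half_pos (sub_pos.2 hba))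
  calc Z * Zᵀ = U * Uᵀ * (Z * Zᵀ) * (U * Uᵀ) := by
        rw [mul_eq_one_comm.1 hU, Matrix.one_mul, Matrix.mul_one]
    _ = U * coordProj (Finset.univ.map g) * Uᵀ := by
        rw [hproj, transpose_mul, transpose_transpose]
        simp only [Matrix.mul_assoc]

/-- If `σ_r(Y) > σ_{r+1}(Y)` and `A, B ∈ O_{m×r}` both maximize
`‖Zᵀ Y‖_F²` over `O_{m×r}`, then `A Aᵀ = B Bᵀ`. -/
theorem stmt8 {m p r : ℕ} (hr1 : 1 ≤ r) (hrm : r ≤ m)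
    (Y : Matrix (Fin m) (Fin p) ℝ) (hgap : sval Y (r + 1) < sval Y r)
    (A B : Matrix (Fin m) (Fin r) ℝ) (hA : A ∈ HSet Y r) (hB : B ∈ HSet Y r) :
    A * Aᵀ = B * Bᵀ := by
  obtain ⟨U, hU, hY⟩ := exists_orthogonal_mul_transpose_self_eq Y
  obtain ⟨g, hg, hg'⟩ := exists_embedding_getD_reverse_sort hrm
    (isHermitian_mul_conjTranspose_self Y).eigenvalues 0
  have hproj : ∀ Z ∈ HSet Y r, Z * Zᵀ = U * coordProj (Finset.univ.map g) * Uᵀ := fun _ hZ =>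
    mul_transpose_self_eq_of_mem_hSet hU hY (getD_eigList_lt_of_sval_lt hgap) hg hg' hZ
  exact (hproj A hA).trans (hproj B hB).symm
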